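/- Let m ≥ 3 be an integer, let X be a finite connected 2-connected graph such that the number N of maximal spanning trees of X not containing a given edge is independent of the edge, and let X̃ be the ℤ_m-homology cover of X, with d the graph metric on X̃ and d_Q the spanning-tree pseudometric on X̃. Then for every x, y ∈ X̃: d_Q(x,y) < girth(X) if and only if d(x,y) < girth(X); and if these inequalities hold, then d_Q(x,y) = d(x,y). -/

import Mathlib

open Filter
open scoped ENNReal NNReal

/-- `F` is a coarse embedding of `(X, dX)` into `(Y, dY)`: there are non-decreasing
functions `ρ₋, ρ₊` tending to infinity which control the distortion of distances. -/
def CoarseEmbeddingWith {X Y : Type*} (dX : X → X → ℝ) (dY : Y → Y → ℝ) (F : X → Y) : Prop :=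
  ∃ ρminus ρplus : ℝ → ℝ, Monotone ρminus ∧ Monotone ρplus ∧
    Tendsto ρminus atTop atTop ∧ Tendsto ρplus atTop atTop ∧
    ∀ x x' : X, ρminus (dX x x') ≤ dY (F x) (F x') ∧ dY (F x) (F x') ≤ ρplus (dX x x')

def IsPseudoMetricOn {X : Type*} (d : X → X → ℝ) : Prop :=
  (∀ x, d x x = 0) ∧ (∀ x y, d x y = d y x) ∧ ∀ x y z, d x z ≤ d x y + d y z

def IsMetricOn {X : Type*} (d : X → X → ℝ) : Prop :=
  (∀ x y, d x y = 0 ↔ x = y) ∧ (∀ x y, d x y = d y x) ∧ ∀ x y z, d x z ≤ d x y + d y z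

/-- The diameter of a space with distance function `dY`. -/
noncomputable def spaceDiam {Y : Type*} (dY : Y → Y → ℝ) : ℝ :=
  sSup (Set.range fun p : Y × Y => dY p.1 p.2)

/-- `D` is a coarse disjoint union of the spaces `(Y i, dY i)`: it restricts to `dY i` on each
component `Y i`, and the distance between two distinct components exceeds the maximum of
their diameters. -/
def IsCoarseDisjointUnionOf {ι : Type*} {Y : ι → Type*} (dY : ∀ i, Y i → Y i → ℝ)
    (D : (Σ i, Y i) → (Σ i, Y i) → ℝ) : Prop :=
  (∀ (i : ι) (x y : Y i), D ⟨i, x⟩ ⟨i, y⟩ = dY i x y) ∧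
  ∀ i j, i ≠ j → ∀ (x : Y i) (y : Y j),
    max (spaceDiam (dY i)) (spaceDiam (dY j)) < D ⟨i, x⟩ ⟨j, y⟩

namespace MultiGraph

variable {V E : Type*}

/-- The initial vertex of a step traversing the edge `s.1` forwards (`s.2 = true`) or
backwards (`s.2 = false`). -/
def stepSrc (src tgt : E → V) (s : E × Bool) : V := if s.2 then src s.1 else tgt s.1

/-- The terminal vertex of a step. -/
def stepTgt (src tgt : E → V) (s : E × Bool) : V := if s.2 then tgt s.1 else src s.1

/-- `p` is a walk from `a` to `b` in the multigraph with edge endpoint maps `src`, `tgt`. -/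
def IsWalk (src tgt : E → V) : V → V → List (E × Bool) → Prop
  | a, b, [] => a = b
  | a, b, s :: p => stepSrc src tgt s = a ∧ IsWalk src tgt (stepTgt src tgt s) b p

/-- The multigraph is connected. -/
def Connected (src tgt : E → V) : Prop := ∀ a b : V, ∃ p, IsWalk src tgt a b p

/-- The graph distance between two vertices (with junk value if there is no walk). -/
noncomputable def gdist (src tgt : E → V) (a b : V) : ℕ :=
  sInf {n | ∃ p, IsWalk src tgt a b p ∧ p.length = n}

/-- A cycle based at `a`: a nonempty closed walk repeating no edge and no vertex. -/
def IsCycle (src tgt : E → V) (a : V) (p : List (E × Bool)) : Prop :=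
  IsWalk src tgt a a p ∧ p ≠ [] ∧ (p.map Prod.fst).Nodup ∧ (p.map (stepSrc src tgt)).Nodup

/-- The girth: the length of a shortest cycle (`⊤` if there are no cycles). -/
noncomputable def girth (src tgt : E → V) : ℕ∞ :=
  sInf {n : ℕ∞ | ∃ (a : V) (p : List (E × Bool)), IsCycle src tgt a p ∧ (p.length : ℕ∞) = n}

/-- Removing any single edge leaves the graph connected. -/
def TwoConnected (src tgt : E → V) : Prop :=
  ∀ (e : E) (a b : V), ∃ p, IsWalk src tgt a b p ∧ ∀ s ∈ p, s.1 ≠ e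

/-- `T` is the edge set of a maximal spanning tree: every pair of vertices is joined by a
walk through `T`, and every cycle of the graph uses an edge outside `T`. -/
def IsSpanningTree (src tgt : E → V) (T : Set E) : Prop :=
  (∀ a b : V, ∃ p, IsWalk src tgt a b p ∧ ∀ s ∈ p, s.1 ∈ T) ∧
  ∀ (a : V) (p : List (E × Bool)), IsCycle src tgt a p → ∃ s ∈ p, s.1 ∉ T

/-- The number `N_e` of maximal spanning trees avoiding the edge `e`. -/
noncomputable def numTreesAvoiding (src tgt : E → V) (e : E) : ℕ :=
  Nat.card {T : Set E // IsSpanningTree src tgt T ∧ e ∉ T}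

open Classical in
/-- A chosen geodesic from `a` to `b` (junk value `[]` if there is no walk). -/
noncomputable def geod (src tgt : E → V) (a b : V) : List (E × Bool) :=
  if h : ∃ p, IsWalk src tgt a b p ∧ p.length = gdist src tgt a b then h.choose else []

open Classical in
/-- The number of times the walk `p` traverses the edge `e` in the positive direction. -/
noncomputable def countF (e : E) (p : List (E × Bool)) : ℕ :=
  (p.filter fun s => s.1 = e ∧ s.2 = true).length

open Classical in
/-- The number of times the walk `p` traverses the edge `e` in the negative direction. -/
noncomputable def countB (e : E) (p : List (E × Bool)) : ℕ :=
  (p.filter fun s => s.1 = e ∧ s.2 = false).length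

/-- Two walks are `m`-congruent if for every edge the signed numbers of traversals agree
modulo `m`. -/
def MCongruent (m : ℕ) (p₁ p₂ : List (E × Bool)) : Prop :=
  ∀ e : E, ((countF e p₁ : ℤ) - (countB e p₁ : ℤ)) ≡
    ((countF e p₂ : ℤ) - (countB e p₂ : ℤ)) [ZMOD (m : ℤ)]

/-- A walk has no backtrack if no step is immediately followed by the same edge reversed. -/
def NoBacktrack (p : List (E × Bool)) : Prop :=
  List.Chain' (fun s s' => ¬(s'.1 = s.1 ∧ s'.2 = !s.2)) p

section Cover

open Classical in
/-- The image in `(ℤ/m)^{E ∖ T₀}` of the generator of `π₁` corresponding to the edge `e`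
(trivial if `e` lies in the maximal spanning tree `T₀`). -/
noncomputable def coverRho (m : ℕ) (T₀ : Set E) (e : E) : {e' : E // e' ∉ T₀} → ZMod m :=
  fun f => if f.1 = e then 1 else 0

/-- Source map of the `ℤ/m`-homology cover built from the maximal spanning tree `T₀`:
the lift `(e, k)` of the edge `e` starts at `(src e, k)`. -/
def coverSrc (m : ℕ) (src : E → V) (T₀ : Set E) :
    E × ({e' : E // e' ∉ T₀} → ZMod m) → V × ({e' : E // e' ∉ T₀} → ZMod m) :=
  fun ek => (src ek.1, ek.2)

/-- Target map of the `ℤ/m`-homology cover: the lift `(e, k)` of the edge `e` ends at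
`(tgt e, k + ρ(e))`. -/
noncomputable def coverTgt (m : ℕ) (tgt : E → V) (T₀ : Set E) :
    E × ({e' : E // e' ∉ T₀} → ZMod m) → V × ({e' : E // e' ∉ T₀} → ZMod m) :=
  fun ek => (tgt ek.1, ek.2 + coverRho m T₀ ek.1)

open Classical in
/-- The number of positively oriented lifts of the edge `e` traversed by a walk in the cover. -/
noncomputable def countLiftF (m : ℕ) (T₀ : Set E) (e : E)
    (p : List ((E × ({e' : E // e' ∉ T₀} → ZMod m)) × Bool)) : ℕ :=
  (p.filter fun s => s.1.1 = e ∧ s.2 = true).length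

open Classical in
/-- The number of negatively oriented lifts of the edge `e` traversed by a walk in the cover. -/
noncomputable def countLiftB (m : ℕ) (T₀ : Set E) (e : E)
    (p : List ((E × ({e' : E // e' ∉ T₀} → ZMod m)) × Bool)) : ℕ :=
  (p.filter fun s => s.1.1 = e ∧ s.2 = false).length

/-- `φ(e, x, y)`: the smallest non-negative residue modulo `m` of the absolute difference
between the numbers of positively and negatively oriented lifts of `e` traversed by the
chosen geodesic from `x` to `y` in the `ℤ/m`-homology cover. -/
noncomputable def phi (m : ℕ) (src tgt : E → V) (T₀ : Set E) (e : E)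
    (x y : V × ({e' : E // e' ∉ T₀} → ZMod m)) : ℕ :=
  (((countLiftF m T₀ e (geod (coverSrc m src T₀) (coverTgt m tgt T₀) x y) : ℤ) -
      (countLiftB m T₀ e (geod (coverSrc m src T₀) (coverTgt m tgt T₀) x y) : ℤ)).natAbs) % m

/-- The pseudometric `d_Q` on the `ℤ/m`-homology cover:
`d_Q(x,y) = Σ_{e ∈ E} Σ_{T : e ∉ T} (1/N_e) · min{φ(e,x,y), m − φ(e,x,y)}`,
the inner sum ranging over maximal spanning trees not containing `e`. -/
noncomputable def dQ (m : ℕ) (src tgt : E → V) (T₀ : Set E)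
    (x y : V × ({e' : E // e' ∉ T₀} → ZMod m)) : ℝ :=
  ∑ᶠ (e : E), ∑ᶠ (T : Set E) (_ : IsSpanningTree src tgt T ∧ e ∉ T),
    (1 / (numTreesAvoiding src tgt e : ℝ)) *
      min (phi m src tgt T₀ e x y : ℝ) ((m : ℝ) - (phi m src tgt T₀ e x y : ℝ))

open Classical in
/-- The distance `d_T(C^T_x, C^T_y)` between the clouds of `x` and `y` in the Cayley graph
of `(ℤ/m)^{E ∖ T}` obtained by collapsing the clouds associated to the maximal spanning
tree `T`: the least number of lifts of edges outside `T` traversed by a walk from `x` to `y`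
in the cover. -/
noncomputable def cloudDist (m : ℕ) (src tgt : E → V) (T₀ : Set E) (T : Set E)
    (x y : V × ({e' : E // e' ∉ T₀} → ZMod m)) : ℕ :=
  sInf {n | ∃ p, IsWalk (coverSrc m src T₀) (coverTgt m tgt T₀) x y p ∧
    (p.filter fun s => s.1.1 ∉ T).length = n}

open Classical in
/-- The cloud `C^T_x ∈ (ℤ/m)^{E ∖ T}` containing `x`, computed from a chosen geodesic from a
fixed basepoint of the cover to `x` by counting signed traversals of lifts of edges outside
`T`. -/
noncomputable def cloud (m : ℕ) (src tgt : E → V) (T₀ : Set E) (T : Set E)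
    (x : V × ({e' : E // e' ∉ T₀} → ZMod m)) : {e : E // e ∉ T} → ZMod m :=
  if h : Nonempty (V × ({e' : E // e' ∉ T₀} → ZMod m)) then
    fun f =>
      (((countLiftF m T₀ f.1 (geod (coverSrc m src T₀) (coverTgt m tgt T₀) h.some x) : ℤ) -
        (countLiftB m T₀ f.1 (geod (coverSrc m src T₀) (coverTgt m tgt T₀) h.some x) : ℤ)
          : ℤ) : ZMod m)
  else fun _ => 0

end Cover

/-- `(pV, pE)` is a covering of multigraphs: it commutes with the endpoint maps, and steps
lift uniquely at every vertex. -/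
def IsGraphCovering {V' E' : Type*} (src tgt : E → V) (src' tgt' : E' → V')
    (pV : V' → V) (pE : E' → E) : Prop :=
  (∀ e : E', pV (src' e) = src (pE e)) ∧ (∀ e : E', pV (tgt' e) = tgt (pE e)) ∧
  ∀ (v' : V') (s : E × Bool), stepSrc src tgt s = pV v' →
    ∃! s' : E' × Bool, stepSrc src' tgt' s' = v' ∧ pE s'.1 = s.1 ∧ s'.2 = s.2

end MultiGraph

/-- The word length of `a` with respect to the symmetrization of the generating set `S`
in an additive group. -/
noncomputable def addWordLength {A : Type*} [AddGroup A] (S : Set A) (a : A) : ℕ :=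
  sInf {n | ∃ l : List A, (∀ x ∈ l, x ∈ S ∨ -x ∈ S) ∧ l.sum = a ∧ l.length = n}

open Classical in
/-- The word metric on `(ℤ/m)^r` with respect to the standard generating set
(one canonical generator for each factor). -/
noncomputable def zmodWordDist (m r : ℕ) (a b : Fin r → ZMod m) : ℕ :=
  addWordLength {g : Fin r → ZMod m | ∃ i : Fin r, g = Pi.single i 1} (b - a)


namespace MultiGraph

section Helpers

variable {V E : Type}

/-- The reverse of a step. -/
def rvs (s : E × Bool) : E × Bool := (s.1, !s.2)

theorem rvs_rvs (s : E × Bool) : rvs (rvs s) = s := by simp [rvs]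

theorem rvs_ne (s : E × Bool) : rvs s ≠ s := by
  rcases s with ⟨e, b⟩
  cases b <;> simp [rvs]

theorem rvs_fst (s : E × Bool) : (rvs s).1 = s.1 := rfl

theorem src_rvs (src tgt : E → V) (s : E × Bool) :
    stepSrc src tgt (rvs s) = stepTgt src tgt s := by
  rcases s with ⟨e, b⟩
  cases b <;> simp [rvs, stepSrc, stepTgt]

theorem tgt_rvs (src tgt : E → V) (s : E × Bool) :
    stepTgt src tgt (rvs s) = stepSrc src tgt s := by
  rcases s with ⟨e, b⟩
  cases b <;> simp [rvs, stepSrc, stepTgt]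

theorem eq_or_rvs {s t : E × Bool} (h : s.1 = t.1) : t = s ∨ t = rvs s := by
  rcases s with ⟨e, b⟩
  rcases t with ⟨e', b'⟩
  simp only at h
  subst h
  cases b <;> cases b' <;> simp [rvs]

theorem isWalk_append (src tgt : E → V) (a b : V) (p q : List (E × Bool)) :
    IsWalk src tgt a b (p ++ q) ↔ ∃ c, IsWalk src tgt a c p ∧ IsWalk src tgt c b q := by
  induction p generalizing a with
  | nil => simp [IsWalk]
  | cons s p ih =>
    simp only [List.cons_append, IsWalk, ih]
    constructor
    · rintro ⟨h, c, h1, h2⟩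
      exact ⟨c, ⟨h, h1⟩, h2⟩
    · rintro ⟨c, ⟨h, h1⟩, h2⟩
      exact ⟨h, c, h1, h2⟩

/-- Reachability inside a set of edges. -/
def Reach (src tgt : E → V) (S : Set E) (a b : V) : Prop :=
  ∃ p, IsWalk src tgt a b p ∧ ∀ s ∈ p, s.1 ∈ S

theorem Reach.refl (src tgt : E → V) (S : Set E) (a : V) : Reach src tgt S a a :=
  ⟨[], rfl, by simp⟩

theorem Reach.trans {src tgt : E → V} {S : Set E} {a b c : V} (h : Reach src tgt S a b)
    (h' : Reach src tgt S b c) : Reach src tgt S a c := by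
  obtain ⟨p, hp, hpS⟩ := h
  obtain ⟨q, hq, hqS⟩ := h'
  refine ⟨p ++ q, (isWalk_append _ _ _ _ _ _).2 ⟨b, hp, hq⟩, ?_⟩
  intro s hs
  rcases List.mem_append.1 hs with h | h
  · exact hpS s h
  · exact hqS s h

theorem Reach.step {src tgt : E → V} {S : Set E} (s : E × Bool) (hs : s.1 ∈ S) :
    Reach src tgt S (stepSrc src tgt s) (stepTgt src tgt s) :=
  ⟨[s], ⟨rfl, rfl⟩, by simpa using hs⟩

theorem Reach.symm {src tgt : E → V} {S : Set E} {a b : V} (h : Reach src tgt S a b) :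
    Reach src tgt S b a := by
  obtain ⟨p, hp, hpS⟩ := h
  induction p generalizing a with
  | nil =>
    obtain rfl : a = b := hp
    exact Reach.refl _ _ _ _
  | cons s p ih =>
    obtain ⟨rfl, h2⟩ := hp
    have h3 := ih h2 (fun t ht => hpS t (List.mem_cons_of_mem _ ht))
    have h4 := Reach.step (src := src) (tgt := tgt) (rvs s) (hpS s (List.mem_cons_self))
    rw [src_rvs, tgt_rvs] at h4
    exact h3.trans h4

/-- There is a spanning tree avoiding a given edge. -/
theorem exists_tree_avoiding [Finite E] (src tgt : E → V) (h2 : TwoConnected src tgt) (e : E) :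
    ∃ T, IsSpanningTree src tgt T ∧ e ∉ T := by
  let A : Set (Set E) := {T | e ∉ T ∧ ∀ a b, Reach src tgt T a b}
  have hA : A.Finite := Set.toFinite A
  have hne : A.Nonempty := by
    refine ⟨{e}ᶜ, by simp, fun a b => ?_⟩
    obtain ⟨p, hp, hp'⟩ := h2 e a b
    exact ⟨p, hp, hp'⟩
  obtain ⟨T, hT⟩ := hA.exists_minimal hne
  obtain ⟨⟨heT, hTc⟩, hmin⟩ := hT
  refine ⟨T, ⟨hTc, ?_⟩, heT⟩
  intro a p hp
  by_contra hcon
  push Not at hcon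
  obtain ⟨hw, hne, hnd, -⟩ := hp
  cases p with
  | nil => exact hne rfl
  | cons s p =>
    obtain ⟨rfl, hw2⟩ := hw
    rw [List.map_cons, List.nodup_cons] at hnd
    have hr : Reach src tgt (T \ {s.1}) (stepTgt src tgt s) (stepSrc src tgt s) := by
      refine ⟨p, hw2, fun t ht => ⟨hcon t (List.mem_cons_of_mem _ ht), ?_⟩⟩
      intro h
      apply hnd.1
      rw [← Set.mem_singleton_iff.1 h]
      exact List.mem_map_of_mem ht
    have hmem : T \ {s.1} ∈ A := by
      refine ⟨fun h => heT h.1, fun a b => ?_⟩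
      obtain ⟨q, hq, hqT⟩ := hTc a b
      induction q generalizing a with
      | nil =>
        obtain rfl : a = b := hq
        exact Reach.refl _ _ _ _
      | cons t q ih =>
        obtain ⟨rfl, hq2⟩ := hq
        refine Reach.trans ?_ (ih _ hq2 (fun u hu => hqT u (List.mem_cons_of_mem _ hu)))
        by_cases hts : s.1 = t.1
        · rcases eq_or_rvs hts with rfl | rfl
          · exact hr.symm
          · rw [src_rvs, tgt_rvs]
            exact hr
        · exact Reach.step t ⟨hqT t (List.mem_cons_self), fun h => hts (Set.mem_singleton_iff.1 h).symm⟩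
    have := hmin hmem Set.diff_subset (hcon s (List.mem_cons_self))
    exact this.2 rfl

/-- No step immediately followed by its reverse. -/
def NoBT (p : List (E × Bool)) : Prop := ∀ l₁ s l₂, p ≠ l₁ ++ s :: rvs s :: l₂

theorem NoBT.of_sub {p q : List (E × Bool)} (h : NoBT p) (hq : q <:+: p) : NoBT q := by
  rintro l₁ s l₂ rfl
  obtain ⟨u, v, rfl⟩ := hq
  exact h (u ++ l₁) s (l₂ ++ v) (by simp)

theorem exists_dup {α β : Type} (f : α → β) (l : List α) (h : ¬ (l.map f).Nodup) :
    ∃ l₁ s l₂ s' l₃, l = l₁ ++ s :: (l₂ ++ s' :: l₃) ∧ f s = f s' := by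
  induction l with
  | nil => simp at h
  | cons x l ih =>
    rw [List.map_cons, List.nodup_cons, not_and_or, not_not] at h
    rcases h with h | h
    · obtain ⟨y, hy, hxy⟩ := List.mem_map.1 h
      obtain ⟨u, v, rfl⟩ := List.append_of_mem hy
      exact ⟨[], x, u, y, v, rfl, hxy.symm⟩
    · obtain ⟨l₁, s, l₂, s', l₃, rfl, hfs⟩ := ih h
      exact ⟨x :: l₁, s, l₂, s', l₃, rfl, hfs⟩

/-- A nonempty closed walk without backtracks contains a cycle. -/
theorem exists_cycle_of_closed (src tgt : E → V) (n : ℕ) :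
    ∀ (a : V) (q : List (E × Bool)), q.length ≤ n → IsWalk src tgt a a q → q ≠ [] → NoBT q →
      ∃ a' q', IsCycle src tgt a' q' ∧ q' <:+: q := by
  induction n with
  | zero =>
    intro a q hq _ hne
    exact absurd (List.length_eq_zero_iff.1 (Nat.le_zero.1 hq)) hne
  | succ n ih =>
    intro a q hlen hw hne hbt
    by_cases hnd : (q.map (stepSrc src tgt)).Nodup
    · refine ⟨a, q, ⟨hw, hne, ?_, hnd⟩, List.infix_rfl⟩
      by_contra hdup
      obtain ⟨l₁, s, l₂, s', l₃, rfl, hs⟩ := exists_dup _ _ hdup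
      rcases eq_or_rvs hs with rfl | rfl
      · simp [List.nodup_append] at hnd
      · cases l₂ with
        | nil => exact hbt l₁ s l₃ rfl
        | cons t l₂ =>
          obtain ⟨c, -, hc⟩ := (isWalk_append _ _ _ _ _ _).1 hw
          obtain ⟨-, ht, -⟩ := hc
          simp [List.nodup_append, src_rvs, ht] at hnd
    · obtain ⟨l₁, s, l₂, s', l₃, rfl, hs⟩ := exists_dup _ _ hnd
      obtain ⟨c, -, hc⟩ := (isWalk_append _ _ _ _ _ _).1 hw
      have hc' : IsWalk src tgt c a ((s :: l₂) ++ s' :: l₃) := hc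
      obtain ⟨d, hd, hd'⟩ := (isWalk_append _ _ _ _ _ _).1 hc'
      have h1 : stepSrc src tgt s = c := hd.1
      have h2 : stepSrc src tgt s' = d := hd'.1
      have hcd : c = d := by rw [← h1, ← h2, hs]
      subst hcd
      have hinf : (s :: l₂) <:+: l₁ ++ s :: (l₂ ++ s' :: l₃) := ⟨l₁, s' :: l₃, by simp⟩
      obtain ⟨a', q', hq', hi⟩ := ih c (s :: l₂) (by simp at hlen ⊢; omega) hd (by simp)
        (hbt.of_sub hinf)
      exact ⟨a', q', hq', hi.trans hinf⟩

theorem exists_cycle_of_dup (src tgt : E → V) (a b : V) (p : List (E × Bool))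
    (hw : IsWalk src tgt a b p) (hbt : NoBT p) (hnd : ¬ (p.map Prod.fst).Nodup) :
    ∃ a' q', IsCycle src tgt a' q' ∧ q' <:+: p := by
  obtain ⟨l₁, s, l₂, s', l₃, rfl, hs⟩ := exists_dup _ _ hnd
  obtain ⟨c, -, hc⟩ := (isWalk_append _ _ _ _ _ _).1 hw
  have hc' : IsWalk src tgt c b ((s :: l₂) ++ s' :: l₃) := hc
  obtain ⟨d, hd, hd'⟩ := (isWalk_append _ _ _ _ _ _).1 hc'
  have h1 : stepSrc src tgt s = c := hd.1
  have h2 : stepSrc src tgt s' = d := hd'.1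
  rcases eq_or_rvs hs with rfl | rfl
  · have hcd : c = d := by rw [← h1, ← h2]
    subst hcd
    have hinf : (s' :: l₂) <:+: l₁ ++ s' :: (l₂ ++ s' :: l₃) := ⟨l₁, s' :: l₃, by simp⟩
    obtain ⟨a', q', hq', hi⟩ := exists_cycle_of_closed src tgt _ c (s' :: l₂) le_rfl hd (by simp)
        (hbt.of_sub hinf)
    exact ⟨a', q', hq', hi.trans hinf⟩
  · have hinf : l₂ <:+: l₁ ++ s :: (l₂ ++ rvs s :: l₃) := ⟨l₁ ++ [s], rvs s :: l₃, by simp⟩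
    have hne : l₂ ≠ [] := by
      rintro rfl
      exact hbt l₁ s l₃ rfl
    rw [src_rvs] at h2
    have hd2 := hd.2
    rw [h2] at hd2
    obtain ⟨a', q', hq', hi⟩ := exists_cycle_of_closed src tgt _ d l₂ le_rfl hd2 hne
        (hbt.of_sub hinf)
    exact ⟨a', q', hq', hi.trans hinf⟩

open Classical in
/-- The signed number of traversals of a step. -/
noncomputable def ch (p : List (E × Bool)) (u : E × Bool) : ℤ :=
  (p.map fun s => (if s = u then (1 : ℤ) else 0) - (if s = rvs u then 1 else 0)).sum

theorem ch_nil (u : E × Bool) : ch [] u = 0 := rfl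

open Classical in
theorem ch_cons (s : E × Bool) (p : List (E × Bool)) (u : E × Bool) :
    ch (s :: p) u = (if s = u then (1 : ℤ) else 0) - (if s = rvs u then 1 else 0) + ch p u := by
  simp [ch]

theorem ch_append (p q : List (E × Bool)) (u : E × Bool) : ch (p ++ q) u = ch p u + ch q u := by
  simp [ch]

theorem ch_rvs (p : List (E × Bool)) (u : E × Bool) : ch p (rvs u) = - ch p u := by
  induction p with
  | nil => simp [ch_nil]
  | cons s p ih =>
    rw [ch_cons, ch_cons, ih, rvs_rvs]
    ring

theorem ch_of_not_mem (p : List (E × Bool)) (u : E × Bool) (h : u.1 ∉ p.map Prod.fst) :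
    ch p u = 0 := by
  induction p with
  | nil => rfl
  | cons s p ih =>
    rw [List.map_cons, List.mem_cons, not_or] at h
    have h1 : s ≠ u := fun h' => h.1 (by rw [h'])
    have h2 : s ≠ rvs u := fun h' => h.1 (by rw [h', rvs_fst])
    rw [ch_cons, ih h.2, if_neg h1, if_neg h2]
    simp

theorem ch_remove (l₁ l₂ : List (E × Bool)) (s u : E × Bool) :
    ch (l₁ ++ s :: rvs s :: l₂) u = ch (l₁ ++ l₂) u := by
  classical
  have h : rvs s = u ↔ s = rvs u :=
    ⟨fun h => by rw [← h, rvs_rvs], fun h => by rw [h, rvs_rvs]⟩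
  have h' : rvs s = rvs u ↔ s = u :=
    ⟨fun h => by rw [← rvs_rvs s, h, rvs_rvs], fun h => by rw [h]⟩
  rw [ch_append, ch_append, ch_cons, ch_cons]
  simp only [h, h']
  ring

theorem isWalk_remove (src tgt : E → V) (a b : V) (l₁ l₂ : List (E × Bool)) (s : E × Bool)
    (h : IsWalk src tgt a b (l₁ ++ s :: rvs s :: l₂)) : IsWalk src tgt a b (l₁ ++ l₂) := by
  obtain ⟨c, hc, h1, -, h3⟩ := (isWalk_append _ _ _ _ _ _).1 h
  rw [tgt_rvs, h1] at h3
  exact (isWalk_append _ _ _ _ _ _).2 ⟨c, hc, h3⟩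

/-- Boundary of the chain of a walk. -/
theorem boundary_ch [Fintype E] [DecidableEq V] (src tgt : E → V) (a b : V)
    (p : List (E × Bool)) (h : IsWalk src tgt a b p) (v : V) :
    (∑ u : E × Bool, if stepSrc src tgt u = v then ch p u else 0) =
      (if a = v then 1 else 0) - (if b = v then 1 else 0) := by
  classical
  induction p generalizing a with
  | nil =>
    obtain rfl : a = b := h
    simp [ch_nil]
  | cons s p ih =>
    obtain ⟨rfl, h2⟩ := h
    have e1 : ∀ u : E × Bool, (if stepSrc src tgt u = v then ch (s :: p) u else 0) =
        (if s = u then (if stepSrc src tgt u = v then 1 else 0) else 0)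
        - (if rvs s = u then (if stepSrc src tgt u = v then 1 else 0) else 0)
        + (if stepSrc src tgt u = v then ch p u else 0) := by
      intro u
      have h : rvs s = u ↔ s = rvs u :=
        ⟨fun h => by rw [← h, rvs_rvs], fun h => by rw [h, rvs_rvs]⟩
      rw [ch_cons]
      simp only [h]
      split_ifs <;> simp
    rw [Finset.sum_congr rfl (fun u _ => e1 u), Finset.sum_add_distrib, Finset.sum_sub_distrib,
      ih _ h2, Finset.sum_ite_eq, Finset.sum_ite_eq]
    simp [src_rvs]

/-- A mod `m` chain without boundary supported on a set of edges without cycles vanishes. -/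
theorem chain_eq_zero {R : Type} [AddCommGroup R] [Fintype E] [DecidableEq V] (src tgt : E → V)
    (S : Set E) (hS : ∀ a p, IsCycle src tgt a p → ∃ s ∈ p, s.1 ∉ S)
    (g : E × Bool → R) (hg : ∀ u, g (rvs u) = - g u) (hgS : ∀ u, g u ≠ 0 → u.1 ∈ S)
    (hb : ∀ v, (∑ u : E × Bool, if stepSrc src tgt u = v then g u else 0) = 0) (u : E × Bool) :
    g u = 0 := by
  classical
  by_contra hu
  have key : ∀ n : ℕ, ∃ s p, p.length = n ∧ (∀ t ∈ s :: p, g t ≠ 0) ∧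
      (∃ b, IsWalk src tgt (stepSrc src tgt s) b (s :: p)) ∧ NoBT (s :: p) := by
    intro n
    induction n with
    | zero =>
      refine ⟨u, [], rfl, by simpa using hu, ⟨_, rfl, rfl⟩, ?_⟩
      intro l₁ s l₂ h
      have := congrArg List.length h
      simp at this
      omega
    | succ n ih =>
      obtain ⟨s, p, hl, hgs, ⟨b, hw⟩, hbt⟩ := ih
      have : ∃ w, stepSrc src tgt w = stepSrc src tgt s ∧ w ≠ s ∧ g w ≠ 0 := by
        by_contra hcon
        push Not at hcon
        have h1 := hb (stepSrc src tgt s)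
        rw [Finset.sum_eq_single s] at h1
        · simp at h1
          exact hgs s (by simp) h1
        · intro w _ hws
          split_ifs with h
          · exact hcon w h hws
          · rfl
        · simp
      obtain ⟨w, hw1, hw2, hw3⟩ := this
      refine ⟨rvs w, s :: p, by simp [hl], ?_, ⟨b, rfl, ?_⟩, ?_⟩
      · intro t ht
        rcases List.mem_cons.1 ht with rfl | ht
        · rw [hg]
          simpa using hw3
        · exact hgs t ht
      · rw [tgt_rvs, hw1]
        exact hw
      · intro l₁ t l₂ h
        cases l₁ with
        | nil =>
          simp only [List.nil_append, List.cons.injEq] at h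
          obtain ⟨h1, h2, -⟩ := h
          rw [← h1, rvs_rvs] at h2
          exact hw2 h2.symm
        | cons x l₁ =>
          simp only [List.cons_append, List.cons.injEq] at h
          exact hbt l₁ t l₂ h.2
  obtain ⟨s, p, hl, hgs, ⟨b, hw⟩, hbt⟩ := key (Fintype.card E)
  have hnd : ¬ ((s :: p).map Prod.fst).Nodup := by
    intro h
    have := h.length_le_card
    simp [hl] at this
  obtain ⟨a', q, hq, hi⟩ := exists_cycle_of_dup src tgt _ _ _ hw hbt hnd
  obtain ⟨t, ht, htS⟩ := hS a' q hq
  exact htS (hgS t (hgs t (hi.subset ht)))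

/-- The endpoints are joined by a walk inside the support of a chain. -/
theorem reach_support {m : ℕ} (hm : 3 ≤ m) [Fintype V] [Fintype E] [DecidableEq V]
    (src tgt : E → V) (a b : V) (g : E × Bool → ZMod m) (hg : ∀ u, g (rvs u) = - g u)
    (hb : ∀ v, (∑ u : E × Bool, if stepSrc src tgt u = v then g u else 0) =
      (if a = v then 1 else 0) - (if b = v then 1 else 0)) :
    Reach src tgt {e | g (e, true) ≠ 0} a b := by
  classical
  by_contra hcon
  have : Fact (1 < m) := ⟨by omega⟩
  set S : Set E := {e | g (e, true) ≠ 0} with hS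
  have hmem : ∀ u : E × Bool, g u ≠ 0 → u.1 ∈ S := by
    rintro ⟨e, c⟩ h
    cases c
    · have := hg (e, true)
      simp only [rvs, Bool.not_true] at this
      rw [this] at h
      simpa [hS] using h
    · exact h
  have h1 : (∑ v : V, if Reach src tgt S a v then
      (∑ u : E × Bool, if stepSrc src tgt u = v then g u else 0) else 0) = 1 := by
    simp only [hb]
    rw [Finset.sum_eq_single a]
    · have hba : b ≠ a := fun h => hcon (h ▸ Reach.refl _ _ _ _)
      simp [Reach.refl, hba]
    · intro v _ hv
      split_ifs with h2 h3 h4 h5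
      · exact absurd h3.symm hv
      · exact absurd h3.symm hv
      · exact absurd (h5 ▸ h2) hcon
      · simp
      · rfl
    · simp
  have h2 : (∑ v : V, if Reach src tgt S a v then
      (∑ u : E × Bool, if stepSrc src tgt u = v then g u else 0) else 0) =
      ∑ u : E × Bool, if Reach src tgt S a (stepSrc src tgt u) then g u else 0 := by
    have : ∀ v : V, (if Reach src tgt S a v then
      (∑ u : E × Bool, if stepSrc src tgt u = v then g u else 0) else 0) =
      ∑ u : E × Bool, if stepSrc src tgt u = v then
        (if Reach src tgt S a (stepSrc src tgt u) then g u else 0) else 0 := by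
      intro v
      split_ifs with h
      · refine Finset.sum_congr rfl fun u _ => ?_
        split_ifs with h1 h2
        · rfl
        · exact absurd (h1 ▸ h) h2
        · rfl
      · symm
        refine Finset.sum_eq_zero fun u _ => ?_
        split_ifs with h1 h2
        · exact absurd (h1 ▸ h2) h
        · rfl
        · rfl
    rw [Finset.sum_congr rfl fun v _ => this v, Finset.sum_comm]
    simp
  have h3 : (∑ u : E × Bool, if Reach src tgt S a (stepSrc src tgt u) then g u else 0) = 0 := by
    refine Finset.sum_involution (fun u _ => rvs u) ?_ ?_ ?_ ?_
    · intro u _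
      by_cases h0 : g u = 0
      · simp [hg, h0]
      · have h4 := Reach.step (src := src) (tgt := tgt) u (hmem u h0)
        have : Reach src tgt S a (stepSrc src tgt (rvs u)) ↔
            Reach src tgt S a (stepSrc src tgt u) := by
          rw [src_rvs]
          exact ⟨fun h => h.trans h4.symm, fun h => h.trans h4⟩
        simp only [this, hg]
        split_ifs <;> simp
    · intro u _ _
      exact rvs_ne u
    · intro u _
      simp
    · intro u _
      exact rvs_rvs u
  rw [h2, h3] at h1
  exact zero_ne_one h1

/-- Removing backtracks. -/
theorem exists_noBT (src tgt : E → V) (S : Set E) (a b : V) (h : Reach src tgt S a b) :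
    ∃ p, IsWalk src tgt a b p ∧ (∀ s ∈ p, s.1 ∈ S) ∧ NoBT p := by
  obtain ⟨p, hp, hpS⟩ := h
  induction hn : p.length using Nat.strong_induction_on generalizing p with
  | _ n ih =>
    by_cases hbt : NoBT p
    · exact ⟨p, hp, hpS, hbt⟩
    · simp only [NoBT] at hbt
      push Not at hbt
      obtain ⟨l₁, s, l₂, rfl⟩ := hbt
      refine ih (l₁ ++ l₂).length ?_ (l₁ ++ l₂) (isWalk_remove _ _ _ _ _ _ _ hp) ?_ rfl
      · simp at hn ⊢
        omega
      · intro t ht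
        apply hpS
        simp at ht ⊢
        tauto

/-- A chain with small support is the chain of a short path. -/
theorem exists_short_walk {m : ℕ} (hm : 3 ≤ m) [Fintype V] [Fintype E]
    (src tgt : E → V) (a b : V) (p : List (E × Bool)) (hp : IsWalk src tgt a b p)
    (hS : ((Set.ncard {e : E | (ch p (e, true) : ZMod m) ≠ 0} : ℕ) : ℕ∞) < girth src tgt) :
    ∃ q, IsWalk src tgt a b q ∧ (∀ u, (ch q u : ZMod m) = ch p u) ∧
      q.length ≤ Set.ncard {e : E | (ch p (e, true) : ZMod m) ≠ 0} := by
  classical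
  have hb : ∀ (p : List (E × Bool)), IsWalk src tgt a b p → ∀ v,
      (∑ u : E × Bool, if stepSrc src tgt u = v then (ch p u : ZMod m) else 0) =
      (if a = v then 1 else 0) - (if b = v then 1 else 0) := by
    intro p hp v
    have := congrArg (Int.cast : ℤ → ZMod m) (boundary_ch src tgt a b p hp v)
    push_cast at this
    exact this
  have hr := reach_support hm src tgt a b (fun u => (ch p u : ZMod m))
    (fun u => by simp [ch_rvs]) (hb p hp)
  set S : Set E := {e : E | (ch p (e, true) : ZMod m) ≠ 0} with hSdef
  have hlen : ∀ l : List (E × Bool), (l.map Prod.fst).Nodup → (∀ s ∈ l, s.1 ∈ S) →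
      l.length ≤ S.ncard := by
    intro l hl hlS
    have h1 : (l.map Prod.fst).toFinset.card = l.length := by
      rw [List.toFinset_card_of_nodup hl, List.length_map]
    rw [← h1, ← Set.ncard_coe_finset]
    refine Set.ncard_le_ncard ?_ (Set.toFinite _)
    intro e he
    simp only [List.coe_toFinset, Set.mem_setOf_eq, List.mem_map] at he
    obtain ⟨s, hs, rfl⟩ := he
    exact hlS s hs
  have hcyc : ∀ a p, IsCycle src tgt a p → ∃ s ∈ p, s.1 ∉ S := by
    intro a' q hq
    by_contra hcon
    push Not at hcon
    have h1 : girth src tgt ≤ (q.length : ℕ∞) := sInf_le ⟨a', q, hq, rfl⟩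
    have h2 : (q.length : ℕ∞) ≤ (S.ncard : ℕ∞) := by
      exact_mod_cast hlen q hq.2.2.1 hcon
    exact absurd (lt_of_lt_of_le hS h1) (not_lt.2 h2)
  obtain ⟨q, hq, hqS, hbt⟩ := exists_noBT src tgt S a b hr
  have hnd : (q.map Prod.fst).Nodup := by
    by_contra h
    obtain ⟨a', c, hc, hi⟩ := exists_cycle_of_dup src tgt a b q hq hbt h
    obtain ⟨t, ht, htS⟩ := hcyc a' c hc
    exact htS (hqS t (hi.subset ht))
  refine ⟨q, hq, ?_, hlen q hnd hqS⟩
  have hmem : ∀ u : E × Bool, (ch p u : ZMod m) ≠ 0 → u.1 ∈ S := by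
    rintro ⟨e, c⟩ h
    cases c
    · have := ch_rvs p (e, true)
      simp only [rvs, Bool.not_true] at this
      rw [this] at h
      simpa [hSdef] using h
    · exact h
  have h0 := chain_eq_zero src tgt S hcyc (fun u => (ch q u : ZMod m) - (ch p u : ZMod m))
    (fun u => by simp [ch_rvs]; ring) ?_ ?_
  · intro u
    exact sub_eq_zero.1 (h0 u)
  · intro u hu
    by_contra hcon
    have h1 : ch q u = 0 := by
      apply ch_of_not_mem
      intro h
      obtain ⟨s, hs, hsu⟩ := List.mem_map.1 h
      exact hcon (hsu ▸ hqS s hs)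
    have h2 : (ch p u : ZMod m) = 0 := by
      by_contra h
      exact hcon (hmem u h)
    simp [h1, h2] at hu
  · intro v
    have h1 := hb p hp v
    have h2 := hb q hq v
    rw [← h1, ← sub_eq_zero, ← Finset.sum_sub_distrib] at h2
    refine Eq.trans ?_ h2
    refine Finset.sum_congr rfl fun u _ => ?_
    split_ifs <;> simp

/-- The distance of an integer to `mℤ`. -/
def mu (m : ℕ) (c : ℤ) : ℕ := min (c.natAbs % m) (m - c.natAbs % m)

theorem mu_zero (m : ℕ) : mu m 0 = 0 := by simp [mu]

theorem mu_one {m : ℕ} (hm : 3 ≤ m) (c : ℤ) (h : c = 1 ∨ c = -1) : mu m c = 1 := by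
  have : c.natAbs = 1 := by omega
  rw [mu, this, Nat.mod_eq_of_lt (by omega)]
  omega

theorem mu_pos {m : ℕ} (hm : 3 ≤ m) (c : ℤ) (h : (c : ZMod m) ≠ 0) : 1 ≤ mu m c := by
  have h1 : c.natAbs % m ≠ 0 := by
    intro h'
    apply h
    rw [ZMod.intCast_zmod_eq_zero_iff_dvd]
    exact Int.natCast_dvd.2 (Nat.dvd_of_mod_eq_zero h')
  have h2 : c.natAbs % m < m := Nat.mod_lt _ (by omega)
  rw [mu]
  omega

theorem sum_mu_of_nodup {m : ℕ} (hm : 3 ≤ m) [Fintype E] (p : List (E × Bool))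
    (h : (p.map Prod.fst).Nodup) : ∑ e : E, mu m (ch p (e, true)) = p.length := by
  classical
  induction p with
  | nil => simp [ch_nil, mu_zero]
  | cons s p ih =>
    rw [List.map_cons, List.nodup_cons] at h
    have h1 : ∀ e : E, mu m (ch (s :: p) (e, true)) =
        (if e = s.1 then 1 else 0) + mu m (ch p (e, true)) := by
      intro e
      rw [ch_cons]
      by_cases he : e = s.1
      · subst he
        rw [ch_of_not_mem p (s.1, true) h.1, mu_zero]
        simp only [if_true, add_zero]
        refine mu_one hm _ ?_
        rcases s with ⟨e, b⟩
        cases b <;> simp [rvs]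
      · have h1 : s ≠ (e, true) := fun h' => he (by rw [h'])
        have h2 : s ≠ rvs (e, true) := fun h' => he (by rw [h']; rfl)
        simp [h1, h2, he]
    rw [Finset.sum_congr rfl fun e _ => h1 e, Finset.sum_add_distrib, ih h.2]
    simp
    omega

theorem ncard_le_sum_mu {m : ℕ} (hm : 3 ≤ m) [Fintype E] (c : E → ℤ) :
    Set.ncard {e : E | (c e : ZMod m) ≠ 0} ≤ ∑ e : E, mu m (c e) := by
  classical
  have : {e : E | (c e : ZMod m) ≠ 0} = ((Finset.univ.filter fun e : E => (c e : ZMod m) ≠ 0 :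
    Finset E) : Set E) := by
    ext e
    simp
  rw [this, Set.ncard_coe_finset, Finset.card_filter]
  refine Finset.sum_le_sum fun e _ => ?_
  split_ifs with h
  · exact mu_pos hm _ h
  · simp

end Helpers

section CoverHelpers

variable {V E : Type}

/-- Projection of a step of the cover. -/
def prS {K : Type} (s : (E × K) × Bool) : E × Bool := (s.1.1, s.2)

theorem cover_project (m : ℕ) (src tgt : E → V) (T₀ : Set E)
    (x y : V × ({e : E // e ∉ T₀} → ZMod m))
    (P : List ((E × ({e : E // e ∉ T₀} → ZMod m)) × Bool))
    (h : IsWalk (coverSrc m src T₀) (coverTgt m tgt T₀) x y P) :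
    IsWalk src tgt x.1 y.1 (P.map prS) ∧
      ∀ f : {e : E // e ∉ T₀}, (ch (P.map prS) (f.1, true) : ZMod m) = y.2 f - x.2 f := by
  induction P generalizing x with
  | nil =>
    obtain rfl : x = y := h
    exact ⟨rfl, by simp [ch_nil]⟩
  | cons s P ih =>
    obtain ⟨rfl, h2⟩ := h
    obtain ⟨h3, h4⟩ := ih _ h2
    rcases s with ⟨⟨e, k⟩, b⟩
    cases b
    · refine ⟨⟨by simp [prS, stepSrc, coverTgt], ?_⟩, ?_⟩
      · simpa [prS, stepTgt, coverSrc] using h3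
      · intro f
        have := h4 f
        rw [List.map_cons, ch_cons]
        push_cast
        rw [this]
        by_cases hf : f.1 = e
        · simp [prS, stepSrc, stepTgt, coverSrc, coverTgt, coverRho, rvs, hf]
          ring
        · have hf' : e ≠ f.1 := fun h => hf h.symm
          simp [prS, stepSrc, stepTgt, coverSrc, coverTgt, coverRho, rvs, hf, hf']
    · refine ⟨⟨by simp [prS, stepSrc, coverSrc], ?_⟩, ?_⟩
      · simpa [prS, stepTgt, coverTgt] using h3
      · intro f
        have := h4 f
        rw [List.map_cons, ch_cons]
        push_cast
        rw [this]
        by_cases hf : f.1 = e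
        · simp [prS, stepSrc, stepTgt, coverSrc, coverTgt, coverRho, rvs, hf]
          ring
        · have hf' : e ≠ f.1 := fun h => hf h.symm
          simp [prS, stepSrc, stepTgt, coverSrc, coverTgt, coverRho, rvs, hf, hf']

theorem cover_lift_aux (m : ℕ) (src tgt : E → V) (T₀ : Set E) (a b : V)
    (p : List (E × Bool)) (h : IsWalk src tgt a b p) (k : {e : E // e ∉ T₀} → ZMod m) :
    ∃ k' P, IsWalk (coverSrc m src T₀) (coverTgt m tgt T₀) (a, k) (b, k') P ∧ P.map prS = p := by
  induction p generalizing a k with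
  | nil =>
    obtain rfl : a = b := h
    exact ⟨k, [], rfl, rfl⟩
  | cons s p ih =>
    obtain ⟨rfl, h2⟩ := h
    rcases s with ⟨e, c⟩
    cases c
    · obtain ⟨k', P, hP, hp⟩ := ih _ h2 (k - coverRho m T₀ e)
      refine ⟨k', ((e, k - coverRho m T₀ e), false) :: P, ⟨?_, ?_⟩, ?_⟩
      · simp [stepSrc, coverTgt]
      · simpa [stepTgt, coverSrc] using hP
      · simp [prS, hp]
    · obtain ⟨k', P, hP, hp⟩ := ih _ h2 (k + coverRho m T₀ e)
      refine ⟨k', ((e, k), true) :: P, ⟨?_, ?_⟩, ?_⟩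
      · simp [stepSrc, coverSrc]
      · simpa [stepTgt, coverTgt] using hP
      · simp [prS, hp]

theorem cover_lift (m : ℕ) (src tgt : E → V) (T₀ : Set E)
    (x y : V × ({e : E // e ∉ T₀} → ZMod m))
    (p : List (E × Bool)) (h : IsWalk src tgt x.1 y.1 p)
    (hc : ∀ f : {e : E // e ∉ T₀}, (ch p (f.1, true) : ZMod m) = y.2 f - x.2 f) :
    ∃ P, IsWalk (coverSrc m src T₀) (coverTgt m tgt T₀) x y P ∧ P.map prS = p := by
  obtain ⟨k', P, hP, hp⟩ := cover_lift_aux m src tgt T₀ x.1 y.1 p h x.2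
  have h1 := (cover_project m src tgt T₀ _ _ P hP).2
  have h2 : k' = y.2 := by
    funext f
    have h3 := h1 f
    rw [hp, hc f] at h3
    simpa using h3.symm
  subst h2
  exact ⟨P, hP, hp⟩

/-- Every mod `m` class outside the tree is realised by a walk in the base. -/
theorem exists_walk_class (m : ℕ) (hm : 3 ≤ m) [Fintype E] (src tgt : E → V) (T₀ : Set E)
    (hT₀ : IsSpanningTree src tgt T₀) (a b : V) (k : {e : E // e ∉ T₀} → ZMod m) :
    ∃ p, IsWalk src tgt a b p ∧
      ∀ f : {e : E // e ∉ T₀}, (ch p (f.1, true) : ZMod m) = k f := by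
  classical
  have : NeZero m := ⟨by omega⟩
  -- the class realised at `a`
  let A : AddSubmonoid ({e : E // e ∉ T₀} → ZMod m) :=
    { carrier := {k | ∃ p, IsWalk src tgt a a p ∧
        ∀ f : {e : E // e ∉ T₀}, (ch p (f.1, true) : ZMod m) = k f}
      zero_mem' := ⟨[], rfl, by simp [ch_nil]⟩
      add_mem' := by
        rintro k k' ⟨p, hp, hpk⟩ ⟨q, hq, hqk⟩
        refine ⟨p ++ q, (isWalk_append _ _ _ _ _ _).2 ⟨a, hp, hq⟩, fun f => ?_⟩
        rw [ch_append]
        push_cast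
        rw [hpk, hqk]
        rfl }
  have htree : ∀ c d : V, ∃ p, IsWalk src tgt c d p ∧
      ∀ f : {e : E // e ∉ T₀}, ch p (f.1, true) = 0 := by
    intro c d
    obtain ⟨p, hp, hpT⟩ := hT₀.1 c d
    refine ⟨p, hp, fun f => ch_of_not_mem _ _ ?_⟩
    intro h
    obtain ⟨s, hs, hsf⟩ := List.mem_map.1 h
    apply f.2
    have := hpT s hs
    rw [hsf] at this
    exact this
  have hsingle : ∀ f : {e : E // e ∉ T₀}, Pi.single f (1 : ZMod m) ∈ A := by
    intro f
    obtain ⟨p, hp, hp0⟩ := htree a (src f.1)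
    obtain ⟨q, hq, hq0⟩ := htree (tgt f.1) a
    refine ⟨p ++ (f.1, true) :: q, (isWalk_append _ _ _ _ _ _).2 ⟨src f.1, hp, rfl, hq⟩, ?_⟩
    intro f'
    rw [ch_append, ch_cons, hp0, hq0]
    by_cases hf : f' = f
    · subst hf
      simp [rvs]
    · have h1 : f.1 ≠ f'.1 := fun h => hf (Subtype.ext h.symm)
      simp [rvs, h1, hf]
  have hall : k ∈ A := by
    have h1 : k = ∑ f, (k f).val • Pi.single f (1 : ZMod m) := by
      funext f'
      rw [Finset.sum_apply, Finset.sum_eq_single f']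
      · rw [Pi.smul_apply, Pi.single_eq_same, nsmul_eq_mul, mul_one, ZMod.natCast_zmod_val]
      · intro f _ hf
        rw [Pi.smul_apply, Pi.single_eq_of_ne (Ne.symm hf), smul_zero]
      · simp
    rw [h1]
    exact AddSubmonoid.sum_mem _ fun f _ => AddSubmonoid.nsmul_mem _ (hsingle f) _
  obtain ⟨p, hp, hpk⟩ := hall
  obtain ⟨q, hq, hq0⟩ := htree a b
  refine ⟨p ++ q, (isWalk_append _ _ _ _ _ _).2 ⟨a, hp, hq⟩, fun f => ?_⟩
  rw [ch_append, hq0]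
  simpa using hpk f

theorem countLift_eq (m : ℕ) (T₀ : Set E) (e : E)
    (P : List ((E × ({e' : E // e' ∉ T₀} → ZMod m)) × Bool)) :
    (countLiftF m T₀ e P : ℤ) - (countLiftB m T₀ e P : ℤ) = ch (P.map prS) (e, true) := by
  classical
  induction P with
  | nil => simp [countLiftF, countLiftB, ch_nil]
  | cons s P ih =>
    rw [List.map_cons, ch_cons, ← ih]
    rcases s with ⟨⟨e', k⟩, b⟩
    by_cases h : e' = e
    · cases b <;> simp [countLiftF, countLiftB, prS, rvs, h] <;> ring
    · cases b <;> simp [countLiftF, countLiftB, prS, rvs, h]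

theorem dQ_eq (m : ℕ) (hm : 3 ≤ m) [Fintype E] (src tgt : E → V)
    (h2 : TwoConnected src tgt) (T₀ : Set E) (x y : V × ({e : E // e ∉ T₀} → ZMod m)) :
    dQ m src tgt T₀ x y = ((∑ e : E, mu m (ch ((geod (coverSrc m src T₀) (coverTgt m tgt T₀)
      x y).map prS) (e, true)) : ℕ) : ℝ) := by
  classical
  unfold dQ
  rw [finsum_eq_sum_of_fintype]
  push_cast
  refine Finset.sum_congr rfl fun e _ => ?_
  have h3 : ∀ c : ℝ, (∑ᶠ (T : Set E) (_ : IsSpanningTree src tgt T ∧ e ∉ T), c) =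
      (numTreesAvoiding src tgt e : ℝ) * c := by
    intro c
    have h4 : {T : Set E | IsSpanningTree src tgt T ∧ e ∉ T}.Finite := Set.toFinite _
    have h5 := finsum_mem_eq_finite_toFinset_sum (fun _ : Set E => c) h4
    simp only [Set.mem_setOf_eq] at h5
    rw [h5, Finset.sum_const, nsmul_eq_mul, ← Set.ncard_eq_toFinset_card _ h4]
    rfl
  rw [h3]
  have hpos : (numTreesAvoiding src tgt e : ℝ) ≠ 0 := by
    obtain ⟨T, hT⟩ := exists_tree_avoiding src tgt h2 e
    have : Nonempty {T : Set E // IsSpanningTree src tgt T ∧ e ∉ T} := ⟨⟨T, hT⟩⟩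
    have h4 : numTreesAvoiding src tgt e ≠ 0 := Nat.card_pos.ne'
    exact_mod_cast h4
  rw [← mul_assoc, mul_one_div_cancel hpos, one_mul]
  have hlt : phi m src tgt T₀ e x y ≤ m := (Nat.mod_lt _ (by omega)).le
  rw [← Nat.cast_sub hlt, ← Nat.cast_min]
  unfold phi mu
  rw [countLift_eq]

end CoverHelpers

end MultiGraph

open MultiGraph in
/-- **Comparison of the two metrics on the `ℤ/m`-homology cover** (Proposition `Compare`):
for `x, y` in the cover `X̃`, `d_Q(x,y) < girth X ↔ d(x,y) < girth X`, and when these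
inequalities hold the two distances agree. -/
theorem dQ_compare_graph_metric (m : ℕ) (hm : 3 ≤ m) (V E : Type) [Fintype V] [Fintype E]
    (src tgt : E → V) (hconn : Connected src tgt) (h2conn : TwoConnected src tgt)
    (N : ℕ) (hN : ∀ e : E, numTreesAvoiding src tgt e = N)
    (T₀ : Set E) (hT₀ : IsSpanningTree src tgt T₀)
    (x y : V × ({e : E // e ∉ T₀} → ZMod m)) :
    (ENNReal.ofReal (dQ m src tgt T₀ x y) < (girth src tgt : ℝ≥0∞) ↔
      ((gdist (coverSrc m src T₀) (coverTgt m tgt T₀) x y : ℕ∞) : ℝ≥0∞) <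
        (girth src tgt : ℝ≥0∞)) ∧
    (ENNReal.ofReal (dQ m src tgt T₀ x y) < (girth src tgt : ℝ≥0∞) →
      dQ m src tgt T₀ x y = (gdist (coverSrc m src T₀) (coverTgt m tgt T₀) x y : ℝ)) := by
  obtain ⟨p₀, hp₀, hp₀c⟩ := exists_walk_class m hm src tgt T₀ hT₀ x.1 y.1 (y.2 - x.2)
  obtain ⟨P₀, hP₀, -⟩ := cover_lift m src tgt T₀ x y p₀ hp₀ hp₀c
  have hgex : ∃ p, IsWalk (coverSrc m src T₀) (coverTgt m tgt T₀) x y p ∧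
      p.length = gdist (coverSrc m src T₀) (coverTgt m tgt T₀) x y :=
    Nat.sInf_mem (s := {n | ∃ p, IsWalk (coverSrc m src T₀) (coverTgt m tgt T₀) x y p ∧
      p.length = n}) ⟨_, P₀, hP₀, rfl⟩
  have hle : ∀ p, IsWalk (coverSrc m src T₀) (coverTgt m tgt T₀) x y p →
      gdist (coverSrc m src T₀) (coverTgt m tgt T₀) x y ≤ p.length :=
    fun p hp => Nat.sInf_le ⟨p, hp, rfl⟩
  have hgeod : IsWalk (coverSrc m src T₀) (coverTgt m tgt T₀) x y
      (geod (coverSrc m src T₀) (coverTgt m tgt T₀) x y) ∧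
      (geod (coverSrc m src T₀) (coverTgt m tgt T₀) x y).length =
        gdist (coverSrc m src T₀) (coverTgt m tgt T₀) x y := by
    unfold geod
    rw [dif_pos hgex]
    exact hgex.choose_spec
  rw [dQ_eq m hm src tgt h2conn T₀ x y]
  obtain ⟨hg1, hg2⟩ := hgeod
  generalize geod (coverSrc m src T₀) (coverTgt m tgt T₀) x y = P at hg1 hg2 ⊢
  generalize gdist (coverSrc m src T₀) (coverTgt m tgt T₀) x y = d at hle hg2 ⊢
  obtain ⟨hw, hcl⟩ := cover_project m src tgt T₀ x y P hg1
  have hlen : (P.map prS).length = d := by rw [List.length_map, hg2]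
  generalize P.map prS = p at hw hcl hlen ⊢
  have hmin : ∀ q, IsWalk src tgt x.1 y.1 q →
      (∀ f : {e : E // e ∉ T₀}, (ch q (f.1, true) : ZMod m) = y.2 f - x.2 f) →
      d ≤ q.length := by
    intro q hq hqc
    obtain ⟨Q, hQ, hQq⟩ := cover_lift m src tgt T₀ x y q hq hqc
    rw [← hQq, List.length_map]
    exact hle Q hQ
  have main1 : (d : ℕ∞) < girth src tgt → ∑ e : E, mu m (ch p (e, true)) = d := by
    intro hd
    rw [← hlen]
    apply sum_mu_of_nodup hm
    by_contra hnd
    have hbt : NoBT p := by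
      rintro l₁ s l₂ rfl
      have h1 := hmin (l₁ ++ l₂) (isWalk_remove _ _ _ _ _ _ _ hw)
        (fun f => by rw [← ch_remove l₁ l₂ s]; exact hcl f)
      simp at hlen h1
      omega
    obtain ⟨a', q, hq, hi⟩ := exists_cycle_of_dup src tgt _ _ p hw hbt hnd
    have h1 : girth src tgt ≤ (q.length : ℕ∞) := sInf_le ⟨a', q, hq, rfl⟩
    have h2 : (q.length : ℕ∞) ≤ (d : ℕ∞) := by
      rw [← hlen]
      exact_mod_cast hi.length_le
    exact absurd (lt_of_lt_of_le hd h1) (not_lt.2 h2)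
  have main2 : ((∑ e : E, mu m (ch p (e, true)) : ℕ) : ℕ∞) < girth src tgt →
      (d : ℕ∞) < girth src tgt := by
    intro hs
    have h1 := ncard_le_sum_mu hm (fun e : E => ch p (e, true))
    have h2 : ((Set.ncard {e : E | (ch p (e, true) : ZMod m) ≠ 0} : ℕ) : ℕ∞) <
        girth src tgt := lt_of_le_of_lt (by exact_mod_cast h1) hs
    obtain ⟨q, hq, hqc, hql⟩ := exists_short_walk hm src tgt _ _ p hw h2
    have h3 := hmin q hq (fun f => by rw [hqc]; exact hcl f)
    exact lt_of_le_of_lt (by exact_mod_cast h3.trans hql) h2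
  have hconv : ∀ n : ℕ, ENNReal.ofReal ((n : ℕ) : ℝ) = ((n : ℕ∞) : ℝ≥0∞) := by
    intro n
    simp
  rw [hconv, ENat.toENNReal_lt, ENat.toENNReal_lt]
  refine ⟨⟨main2, fun hd => by rw [main1 hd]; exact hd⟩, fun hs => ?_⟩
  rw [main1 (main2 hs)]
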